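/- Let b be a prime and α ∈ ℕ with α ≥ 2. If k, l ∈ ℕ₀ satisfy κ(k ⊖ l) > 2α, then b̂_τ(k) · conj(b̂_τ(l)) = 0 for every integer 0 ≤ τ ≤ α. -/

import Mathlib

/-!
A polynomial of degree less than `κ(k)` is orthogonal to the Walsh function `wal_k`; hence
`b̂_τ(k) = 0` as soon as `κ(k) > τ`. Since `κ(k ⊖ l) ≤ κ(k) + κ(l)`, the hypothesis
`κ(k ⊖ l) > 2α` forces `κ(k) > α` or `κ(l) > α`, so that one of the two factors vanishes.

The orthogonality (`moment_eq_zero`, for monomials) rests on the self-similarity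
`wal_k((j + y) / b) = ω_b^{κ_0 j} wal_{k / b}(y)` for `0 ≤ j < b` and `0 ≤ y < 1`, where `κ_0` is
the lowest digit of `k`. Cutting `[0, 1)` into `b` intervals writes the `n`-th moment of `wal_k`
as a combination of the moments of order `m ≤ n` of `wal_{k / b}` (`moment_rec`), in which the
moment of order `n` has a coefficient proportional to `∑_j ω_b^{-κ_0 j}`. This sum is zero if
`κ_0 ≠ 0`, so passing to `k / b` loses one nonzero digit only when it also loses one degree, and
induction on `k` applies.
-/

open scoped BigOperators

/-- The `i`-th digit (starting from `i = 0`) of the `b`-adic expansion of `k`. -/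
def bdigit (b k i : ℕ) : ℕ := k / b ^ i % b

/-- The set of indices of nonzero `b`-adic digits of `k`. -/
def bsupp (b k : ℕ) : Finset ℕ := (Finset.range (k + 1)).filter fun i => bdigit b k i ≠ 0

/-- The Hamming metric `κ(k)`: the number of nonzero `b`-adic digits of `k`. -/
def hamming (b k : ℕ) : ℕ := (bsupp b k).card

/-- The Dick metric `μ_α(k)`: the sum of the `min(v, α)` largest exponents-plus-one
`a_1 > a_2 > ⋯` of the nonzero `b`-adic digits of `k`. -/
def dick (b α k : ℕ) : ℕ := ((((bsupp b k).sort (· ≤ ·)).reverse.take α).map (· + 1)).sum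

/-- Digitwise addition `k ⊕ l` modulo `b` of the `b`-adic digits. -/
def dadd (b k l : ℕ) : ℕ :=
  ∑ i ∈ Finset.range (k + l + 1), (bdigit b k i + bdigit b l i) % b * b ^ i

/-- Digitwise subtraction `k ⊖ l` modulo `b` of the `b`-adic digits. -/
def dsub (b k l : ℕ) : ℕ :=
  ∑ i ∈ Finset.range (k + l + 1), (bdigit b k i + (b - bdigit b l i)) % b * b ^ i

/-- Hamming metric of a vector: sum over coordinates. -/
def hammingVec (b : ℕ) {s : ℕ} (k : Fin s → ℕ) : ℕ := ∑ j, hamming b (k j)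

/-- Dick metric of a vector: sum over coordinates. -/
def dickVec (b α : ℕ) {s : ℕ} (k : Fin s → ℕ) : ℕ := ∑ j, dick b α (k j)

open MeasureTheory

/-- The `i`-th (for `i ≥ 1`) `b`-adic digit `ξ_i` of a real number `x ∈ [0,1)`, using the
expansion in which infinitely many digits differ from `b - 1`. -/
noncomputable def rdigit (b : ℕ) (x : ℝ) (i : ℕ) : ℤ := ⌊x * (b : ℝ) ^ i⌋ % b

/-- The `k`-th `b`-adic Walsh function, `wal_k(x) = ω_b^{κ_0 ξ_1 + κ_1 ξ_2 + ⋯}` where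
`ω_b = exp(2π√-1/b)`, `κ` are the `b`-adic digits of `k` and `ξ` those of `x`. -/
noncomputable def walsh (b k : ℕ) (x : ℝ) : ℂ :=
  Complex.exp (2 * (Real.pi : ℂ) * Complex.I / (b : ℂ) *
    ∑ a ∈ Finset.range (k + 1), (bdigit b k a : ℂ) * (rdigit b x (a + 1) : ℂ))

/-- The `k`-th `b`-adic Walsh function on `[0,1)^s`, `wal_k(x) = ∏_j wal_{k_j}(x_j)`. -/
noncomputable def walshVec (b : ℕ) {s : ℕ} (k : Fin s → ℕ) (x : Fin s → ℝ) : ℂ :=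
  ∏ j, walsh b (k j) (x j)

/-- The Bernoulli polynomial `B_r` evaluated at a real number. -/
noncomputable def bernoulliPoly (r : ℕ) (x : ℝ) : ℝ := Polynomial.aeval x (Polynomial.bernoulli r)

/-- The reproducing kernel `K_α` of the Sobolev space `H_α`:
`K_α(x,y) = ∑_{r=0}^{α} B_r(x)B_r(y)/(r!)² + (-1)^{α+1} B_{2α}(|x-y|)/(2α)!`. -/
noncomputable def Kker (α : ℕ) (x y : ℝ) : ℝ :=
  ∑ r ∈ Finset.range (α + 1), bernoulliPoly r x * bernoulliPoly r y / ((r.factorial : ℝ)) ^ 2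
    + (-1 : ℝ) ^ (α + 1) * bernoulliPoly (2 * α) |x - y| / ((2 * α).factorial : ℝ)

/-- The `(k,l)`-th Walsh coefficient of the kernel `K_α`. -/
noncomputable def Khat (b α : ℕ) (k l : ℕ) : ℂ :=
  ∫ x in Set.Ico (0 : ℝ) 1, ∫ y in Set.Ico (0 : ℝ) 1,
    (Kker α x y : ℂ) * (starRingEnd ℂ) (walsh b k x) * walsh b l y

/-- The `(k,l)`-th Walsh coefficient of the `s`-variate kernel
`K_{α,s}(x,y) = ∏_j K_α(x_j, y_j)`. -/
noncomputable def KhatS (b α s : ℕ) (k l : Fin s → ℕ) : ℂ :=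
  ∫ x in Set.univ.pi fun _ : Fin s => Set.Ico (0 : ℝ) 1,
    ∫ y in Set.univ.pi fun _ : Fin s => Set.Ico (0 : ℝ) 1,
      ((∏ j, Kker α (x j) (y j) : ℝ) : ℂ) * (starRingEnd ℂ) (walshVec b k x) * walshVec b l y

/-- The `k`-th Walsh coefficient `b̂_r(k)` of the normalized Bernoulli polynomial `B_r/r!`. -/
noncomputable def bhat (b r k : ℕ) : ℂ :=
  ∫ x in Set.Ico (0 : ℝ) 1,
    ((bernoulliPoly r x / (r.factorial : ℝ) : ℝ) : ℂ) * (starRingEnd ℂ) (walsh b k x)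

/-- The `(k,l)`-th Walsh coefficient `b̂_{r,per}(k,l)` of `(x,y) ↦ B̃_r(x-y)/r!`, where
`B̃_r` is the 1-periodic extension of the Bernoulli polynomial `B_r` from `[0,1)` to `ℝ`. -/
noncomputable def bhatPer (b r : ℕ) (k l : ℕ) : ℂ :=
  ∫ x in Set.Ico (0 : ℝ) 1, ∫ y in Set.Ico (0 : ℝ) 1,
    ((bernoulliPoly r (Int.fract (x - y)) / (r.factorial : ℝ) : ℝ) : ℂ) *
      (starRingEnd ℂ) (walsh b k x) * walsh b l y

/-! ### Digits and the Hamming metric -/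

lemma bdigit_zero (b k : ℕ) : bdigit b k 0 = k % b := by simp [bdigit]

lemma bdigit_succ (b k i : ℕ) : bdigit b k (i + 1) = bdigit b (k / b) i := by
  simp [bdigit, pow_succ', Nat.div_div_eq_div_mul]

lemma bdigit_eq_zero {b : ℕ} (hb : 2 ≤ b) {k i : ℕ} (h : k < i + 1) : bdigit b k i = 0 := by
  have : k < b ^ i := lt_of_le_of_lt (Nat.lt_succ_iff.mp h) (Nat.lt_pow_self hb)
  simp [bdigit, Nat.div_eq_of_lt this]

lemma mem_bsupp {b : ℕ} (hb : 2 ≤ b) {k i : ℕ} : i ∈ bsupp b k ↔ bdigit b k i ≠ 0 := by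
  simp only [bsupp, Finset.mem_filter, Finset.mem_range, and_iff_right_iff_imp]
  intro h
  by_contra hc
  exact h (bdigit_eq_zero hb (by omega))

lemma hamming_rec_zero {b : ℕ} (hb : 2 ≤ b) {k : ℕ} (h : k % b = 0) :
    hamming b k ≤ hamming b (k / b) := by
  have : bsupp b k ⊆ (bsupp b (k / b)).image Nat.succ := by
    intro i hi
    rw [mem_bsupp hb] at hi
    cases i with
    | zero => exact absurd (by rw [bdigit_zero, h]) hi
    | succ i =>
      rw [bdigit_succ] at hi
      exact Finset.mem_image.mpr ⟨i, (mem_bsupp hb).mpr hi, rfl⟩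
  exact (Finset.card_le_card this).trans Finset.card_image_le

lemma hamming_rec {b : ℕ} (hb : 2 ≤ b) (k : ℕ) :
    hamming b k ≤ hamming b (k / b) + 1 := by
  have : bsupp b k ⊆ insert 0 ((bsupp b (k / b)).image Nat.succ) := by
    intro i hi
    rw [mem_bsupp hb] at hi
    cases i with
    | zero => exact Finset.mem_insert_self _ _
    | succ i =>
      rw [bdigit_succ] at hi
      exact Finset.mem_insert_of_mem (Finset.mem_image.mpr ⟨i, (mem_bsupp hb).mpr hi, rfl⟩)
  refine (Finset.card_le_card this).trans ((Finset.card_insert_le _ _).trans ?_)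
  exact Nat.add_le_add_right Finset.card_image_le 1

/-- A sum `∑_{i < N} d_i b^i` with all `d_i < b` has the `d_i` as its digits. -/
lemma bdigit_sum {b : ℕ} (hb : 2 ≤ b) (N : ℕ) : ∀ (d : ℕ → ℕ), (∀ i, d i < b) → ∀ i,
    bdigit b (∑ i ∈ Finset.range N, d i * b ^ i) i = if i < N then d i else 0 := by
  induction N with
  | zero => intro d _ i; simp [bdigit]
  | succ N ih =>
    intro d hd i
    have e : ∑ i ∈ Finset.range (N + 1), d i * b ^ i
        = d 0 + b * ∑ i ∈ Finset.range N, d (i + 1) * b ^ i := by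
      rw [Finset.sum_range_succ', Finset.mul_sum, add_comm]
      congr 1
      · simp
      · exact Finset.sum_congr rfl fun i _ => by ring
    rw [e]
    cases i with
    | zero => simp [bdigit_zero, Nat.mod_eq_of_lt (hd 0)]
    | succ i =>
      rw [bdigit_succ, Nat.add_mul_div_left _ _ (by omega), Nat.div_eq_of_lt (hd 0), zero_add,
        ih (fun i => d (i + 1)) fun i => hd _]
      simp

lemma hamming_dsub_le {b : ℕ} (hb : 2 ≤ b) (k l : ℕ) :
    hamming b (dsub b k l) ≤ hamming b k + hamming b l := by
  have : bsupp b (dsub b k l) ⊆ bsupp b k ∪ bsupp b l := by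
    intro i hi
    rw [mem_bsupp hb, dsub,
      bdigit_sum hb _ (fun i => (bdigit b k i + (b - bdigit b l i)) % b)
        fun i => Nat.mod_lt _ (by omega)] at hi
    rw [Finset.mem_union, mem_bsupp hb, mem_bsupp hb]
    by_contra hc
    push Not at hc
    simp [hc.1, hc.2] at hi
  exact (Finset.card_le_card this).trans (Finset.card_union_le _ _)

/-! ### Walsh functions -/

/-- The factor `ω_b^{κ_0 j}` by which `wal_k` on the `j`-th interval of length `1 / b` differs from
a rescaled copy of `wal_{k / b}`. -/
noncomputable def walshFactor (b k j : ℕ) : ℂ :=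
  Complex.exp (2 * (Real.pi : ℂ) * Complex.I / (b : ℂ) * (((k % b : ℕ) : ℂ) * (j : ℂ)))

lemma rdigit_one {b : ℕ} (hb : 2 ≤ b) {j : ℕ} (hj : j < b) {y : ℝ} (h0 : 0 ≤ y) (h1 : y < 1) :
    rdigit b ((j + y) / b) 1 = j := by
  have hb' : (b : ℝ) ≠ 0 := by positivity
  have : ⌊((j : ℝ) + y) / b * (b : ℝ) ^ 1⌋ = (j : ℤ) := by
    rw [pow_one, div_mul_cancel₀ _ hb', Int.floor_eq_iff]
    push_cast
    constructor <;> linarith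
  rw [rdigit, this]
  exact Int.emod_eq_of_lt (by positivity) (by exact_mod_cast hj)

lemma rdigit_succ_succ {b : ℕ} (hb : 2 ≤ b) (j a : ℕ) (y : ℝ) :
    rdigit b ((j + y) / b) (a + 1 + 1) = rdigit b y (a + 1) := by
  have hb' : (b : ℝ) ≠ 0 := by positivity
  have : ((j : ℝ) + y) / b * (b : ℝ) ^ (a + 1 + 1)
      = y * (b : ℝ) ^ (a + 1) + (((b : ℤ) * (j * (b : ℤ) ^ a) : ℤ) : ℝ) := by
    push_cast
    field_simp
    ring
  rw [rdigit, rdigit, this, Int.floor_add_intCast, Int.add_mul_emod_self_left]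

/-- The self-similarity of Walsh functions. -/
lemma walsh_split {b : ℕ} (hb : 2 ≤ b) {k : ℕ} (hk : 0 < k) {j : ℕ} (hj : j < b) {y : ℝ}
    (h0 : 0 ≤ y) (h1 : y < 1) :
    walsh b k ((j + y) / b) = walshFactor b k j * walsh b (k / b) y := by
  have hs : ∑ a ∈ Finset.range k, (bdigit b (k / b) a : ℂ) * (rdigit b y (a + 1) : ℂ)
      = ∑ a ∈ Finset.range (k / b + 1), (bdigit b (k / b) a : ℂ) * (rdigit b y (a + 1) : ℂ) := by
    symm
    apply Finset.sum_subset
    · exact Finset.range_subset_range.mpr (Nat.div_lt_self hk hb)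
    · intro a _ ha
      rw [Finset.mem_range] at ha
      rw [bdigit_eq_zero hb (by omega)]
      simp
  rw [walsh, walsh, walshFactor, ← Complex.exp_add, ← mul_add]
  congr 2
  rw [Finset.sum_range_succ', ← hs, add_comm, zero_add, rdigit_one hb hj h0 h1, bdigit_zero]
  congr 1
  refine Finset.sum_congr rfl fun a _ => ?_
  rw [bdigit_succ, rdigit_succ_succ hb]

lemma sum_conj_walshFactor {b : ℕ} (hb : b.Prime) {k : ℕ} (hk : k % b ≠ 0) :
    ∑ j ∈ Finset.range b, (starRingEnd ℂ) (walshFactor b k j) = 0 := by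
  have hb0 : b ≠ 0 := hb.ne_zero
  have hprim := Complex.isPrimitiveRoot_exp b hb0
  have hcop : (k % b).Coprime b := by
    refine Nat.Coprime.symm ((Nat.Prime.coprime_iff_not_dvd hb).mpr fun hd => ?_)
    exact absurd (Nat.le_of_dvd (Nat.pos_of_ne_zero hk) hd)
      (not_le.mpr (Nat.mod_lt _ hb.pos))
  have hz := (hprim.pow_of_coprime _ hcop).geom_sum_eq_zero hb.one_lt
  rw [← map_sum, ← map_zero (starRingEnd ℂ), ← hz]
  congr 1
  refine Finset.sum_congr rfl fun j _ => ?_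
  rw [walshFactor, ← Complex.exp_nat_mul, ← Complex.exp_nat_mul]
  congr 1
  ring

lemma measurable_walsh (b k : ℕ) : Measurable (walsh b k) := by
  unfold walsh rdigit
  have : ∀ a : ℕ, Measurable fun x : ℝ => (((⌊x * (b : ℝ) ^ (a + 1)⌋ % b : ℤ)) : ℂ) := by
    intro a
    exact (measurable_from_top (f := fun z : ℤ => ((z % b : ℤ) : ℂ))).comp
      (Int.measurable_floor.comp (measurable_id.mul_const _))
  refine Complex.measurable_exp.comp (measurable_const.mul ?_)
  exact Finset.measurable_sum _ fun a _ => measurable_const.mul (this a)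

lemma norm_walsh (b k : ℕ) (x : ℝ) : ‖walsh b k x‖ = 1 := by
  rw [walsh]
  have : 2 * (Real.pi : ℂ) * Complex.I / (b : ℂ) *
      ∑ a ∈ Finset.range (k + 1), (bdigit b k a : ℂ) * (rdigit b x (a + 1) : ℂ)
      = ((2 * Real.pi / b *
        ∑ a ∈ Finset.range (k + 1), (bdigit b k a : ℝ) * (rdigit b x (a + 1) : ℝ) : ℝ) : ℂ)
        * Complex.I := by
    push_cast
    ring
  rw [this, Complex.norm_exp_ofReal_mul_I]

/-! ### Moments of Walsh functions -/

/-- The `n`-th moment `∫_0^1 x^n conj(wal_k(x)) dx`. -/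
noncomputable def walshMoment (b k n : ℕ) : ℂ :=
  ∫ x in (0 : ℝ)..1, (x : ℂ) ^ n * (starRingEnd ℂ) (walsh b k x)

lemma intervalIntegrable_moment (b k n : ℕ) (s t : ℝ) :
    IntervalIntegrable (fun x : ℝ => (x : ℂ) ^ n * (starRingEnd ℂ) (walsh b k x)) volume s t := by
  have hc : Continuous fun x : ℝ => (x : ℂ) ^ n := by fun_prop
  refine (hc.intervalIntegrable s t).mono_fun ?_ ?_
  · refine Measurable.aestronglyMeasurable ?_
    exact hc.measurable.mul (Complex.continuous_conj.measurable.comp (measurable_walsh b k))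
  · refine Filter.Eventually.of_forall fun x => ?_
    simp [norm_walsh]

lemma moment_piece {b : ℕ} (hb : 2 ≤ b) {k : ℕ} (hk : 0 < k) (n : ℕ) {j : ℕ} (hj : j < b) :
    ∫ x in ((j : ℝ) / b)..(((j + 1 : ℕ) : ℝ) / b), (x : ℂ) ^ n * (starRingEnd ℂ) (walsh b k x)
      = (b : ℂ)⁻¹ ^ (n + 1) * ∑ m ∈ Finset.range (n + 1),
          (starRingEnd ℂ) (walshFactor b k j) * ((j : ℂ) ^ (n - m) * (n.choose m : ℂ))
            * walshMoment b (k / b) m := by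
  have hb' : (b : ℝ) ≠ 0 := by positivity
  have hbc : (b : ℂ) ≠ 0 := by exact_mod_cast (by omega : b ≠ 0)
  have hcv := intervalIntegral.integral_comp_div_add (a := 0) (b := 1)
    (fun x : ℝ => (x : ℂ) ^ n * (starRingEnd ℂ) (walsh b k x)) hb' ((j : ℝ) / b)
  have e1 : (0 : ℝ) / b + j / b = j / b := by simp
  have e2 : (1 : ℝ) / b + j / b = ((j + 1 : ℕ) : ℝ) / b := by push_cast; ring
  rw [e1, e2] at hcv
  have hpt : ∫ y in (0 : ℝ)..1, ((y / b + j / b : ℝ) : ℂ) ^ n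
        * (starRingEnd ℂ) (walsh b k (y / b + j / b))
      = ∫ y in (0 : ℝ)..1, ∑ m ∈ Finset.range (n + 1), (b : ℂ)⁻¹ ^ n *
          ((starRingEnd ℂ) (walshFactor b k j) * ((j : ℂ) ^ (n - m) * (n.choose m : ℂ)))
            * ((y : ℂ) ^ m * (starRingEnd ℂ) (walsh b (k / b) y)) := by
    refine intervalIntegral.integral_congr_Ioo_of_le zero_le_one fun y hy => ?_
    have ey : y / b + j / b = (j + y) / b := by ring
    simp only [ey]
    rw [walsh_split hb hk hj hy.1.le hy.2, map_mul]
    have : (((j + y) / b : ℝ) : ℂ) ^ n = (b : ℂ)⁻¹ ^ n * ((y : ℂ) + j) ^ n := by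
      push_cast
      rw [← mul_pow]
      congr 1
      ring
    rw [this, add_pow, Finset.mul_sum, Finset.sum_mul]
    exact Finset.sum_congr rfl fun m _ => by ring
  rw [hpt, intervalIntegral.integral_finsetSum
    fun m _ => (intervalIntegrable_moment b (k / b) m 0 1).const_mul _] at hcv
  simp only [intervalIntegral.integral_const_mul] at hcv
  have hsm : ∀ z : ℂ, (b : ℝ) • z = (b : ℂ) * z := fun z => by simp
  rw [hsm] at hcv
  rw [← mul_right_inj' hbc, ← hcv, Finset.mul_sum, Finset.mul_sum]
  refine Finset.sum_congr rfl fun m _ => ?_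
  rw [walshMoment, pow_succ]
  field_simp

/-- The recursion expressing the moments of `wal_k` through those of `wal_{k / b}`. -/
lemma moment_rec {b : ℕ} (hb : 2 ≤ b) {k : ℕ} (hk : 0 < k) (n : ℕ) :
    walshMoment b k n = (b : ℂ)⁻¹ ^ (n + 1) * ∑ m ∈ Finset.range (n + 1),
      (∑ j ∈ Finset.range b, (starRingEnd ℂ) (walshFactor b k j) * (j : ℂ) ^ (n - m))
        * (n.choose m : ℂ) * walshMoment b (k / b) m := by
  have hb' : (b : ℝ) ≠ 0 := by positivity
  have hs := intervalIntegral.sum_integral_adjacent_intervals (n := b)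
    (a := fun j : ℕ => (j : ℝ) / b) (μ := volume)
    (f := fun x : ℝ => (x : ℂ) ^ n * (starRingEnd ℂ) (walsh b k x))
    fun j _ => intervalIntegrable_moment b k n _ _
  simp only [div_self hb', Nat.cast_zero, zero_div] at hs
  rw [walshMoment, ← hs,
    Finset.sum_congr rfl fun j hj => moment_piece hb hk n (Finset.mem_range.mp hj),
    ← Finset.mul_sum, Finset.sum_comm]
  congr 1
  refine Finset.sum_congr rfl fun m _ => ?_
  rw [Finset.sum_mul, Finset.sum_mul]
  exact Finset.sum_congr rfl fun j _ => by ring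

lemma moment_eq_zero {b : ℕ} (hb : b.Prime) (k : ℕ) :
    ∀ n < hamming b k, walshMoment b k n = 0 := by
  have hb2 := hb.two_le
  induction k using Nat.strong_induction_on with
  | _ k ih =>
    intro n hn
    rcases Nat.eq_zero_or_pos k with rfl | hk
    · simp [hamming, bsupp, bdigit] at hn
    have ih' := ih (k / b) (Nat.div_lt_self hk hb2)
    rw [moment_rec hb2 hk]
    refine mul_eq_zero_of_right _ (Finset.sum_eq_zero fun m hm => ?_)
    rw [Finset.mem_range] at hm
    by_cases h0 : k % b = 0
    · have := hamming_rec_zero hb2 h0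
      rw [ih' m (by omega), mul_zero]
    · have := hamming_rec hb2 k
      rcases Nat.lt_or_ge m n with hmn | hmn
      · rw [ih' m (by omega), mul_zero]
      · obtain rfl : m = n := by omega
        simp [sum_conj_walshFactor hb h0]

lemma bhat_eq_zero {b : ℕ} (hb : b.Prime) {r k : ℕ} (h : r < hamming b k) : bhat b r k = 0 := by
  have hpt : ∀ x : ℝ, ((bernoulliPoly r x / (r.factorial : ℝ) : ℝ) : ℂ)
        * (starRingEnd ℂ) (walsh b k x)
      = ∑ m ∈ Finset.range (r + 1), (((Polynomial.bernoulli r).coeff m : ℂ) / r.factorial)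
          * ((x : ℂ) ^ m * (starRingEnd ℂ) (walsh b k x)) := by
    intro x
    have hd : (Polynomial.bernoulli r).natDegree < r + 1 := by
      rw [Nat.lt_succ_iff, Polynomial.natDegree_le_iff_coeff_eq_zero]
      intro N hN
      rw [Polynomial.coeff_bernoulli, if_neg (by omega)]
    rw [bernoulliPoly, Polynomial.aeval_eq_sum_range' hd]
    push_cast
    rw [Finset.sum_div, Finset.sum_mul]
    refine Finset.sum_congr rfl fun m _ => ?_
    rw [Rat.smul_def]
    ring
  rw [bhat, integral_Ico_eq_integral_Ioc, ← intervalIntegral.integral_of_le zero_le_one]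
  simp only [hpt]
  rw [intervalIntegral.integral_finsetSum
    fun m _ => (intervalIntegrable_moment b k m 0 1).const_mul _]
  refine Finset.sum_eq_zero fun m hm => ?_
  rw [Finset.mem_range] at hm
  rw [intervalIntegral.integral_const_mul]
  exact mul_eq_zero_of_right _ (moment_eq_zero hb k m (by omega))


/-- Lemma 5. For a prime `b` and `α ≥ 2`, if `k, l ∈ ℕ₀` satisfy
`κ(k ⊖ l) > 2α`, then `b̂_τ(k) · conj(b̂_τ(l)) = 0` for every `0 ≤ τ ≤ α`. -/
theorem bhat_sparse (b α : ℕ) (hb : b.Prime) (hα : 2 ≤ α) (k l : ℕ)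
    (h : 2 * α < hamming b (dsub b k l)) :
    ∀ τ ≤ α, bhat b τ k * (starRingEnd ℂ) (bhat b τ l) = 0 := by
  intro τ hτ
  have hle := hamming_dsub_le hb.two_le k l
  rcases Nat.lt_or_ge α (hamming b k) with hk | hk
  · rw [bhat_eq_zero hb (by omega), zero_mul]
  · rw [bhat_eq_zero hb (k := l) (by omega), map_zero, mul_zero]
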